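/- Let R_S be the maximal Sender's ex ante payoff over all obedient and incentive compatible deterministic representations, and let R_U = ∑_{i=0}^{n−1} v_i μ_F(A_i) be the unraveling payoff. Then for every R with R_U ≤ R ≤ R_S, there exists an obedient and incentive compatible laminar representation whose Sender's ex ante payoff equals R. -/

import Mathlib

open MeasureTheory Set

noncomputable section

namespace VerifiableDisclosure

/-- The measure on `[0,1]` induced by a density `f`. -/
def densMeasure (f : ℝ → ℝ) : Measure ℝ :=
  (volume.restrict (Icc (0:ℝ) 1)).withDensity (fun x => ENNReal.ofReal (f x))

/-- `f` is a strictly positive density on `[0,1]` inducing a probability measure. -/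
structure IsPrior (f : ℝ → ℝ) : Prop where
  meas : Measurable f
  pos : ∀ x ∈ Icc (0:ℝ) 1, 0 < f x
  prob : densMeasure f univ = 1

/-- The CDF of a measure on `ℝ`. -/
def mcdf (μ : Measure ℝ) (x : ℝ) : ℝ := (μ (Iic x)).toReal

/-- The support of a measure on `ℝ`: points all of whose neighborhoods have positive mass. -/
def msupport (μ : Measure ℝ) : Set ℝ := {x | ∀ U ∈ nhds x, μ U ≠ 0}

/-- `G` is a distribution on `[0,1]` that is a mean-preserving contraction of `μ`. -/
def IsMPC (μ G : Measure ℝ) : Prop :=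
  IsProbabilityMeasure G ∧ msupport G ⊆ Icc (0:ℝ) 1 ∧
    (∀ x ∈ Icc (0:ℝ) 1, (∫ s in (0:ℝ)..x, mcdf G s) ≤ ∫ s in (0:ℝ)..x, mcdf μ s) ∧
    (∫ s in (0:ℝ)..(1:ℝ), mcdf G s) = ∫ s in (0:ℝ)..(1:ℝ), mcdf μ s

/-- Conditional mean of `μ` on the set `B`. -/
def condMean (μ : Measure ℝ) (B : Set ℝ) : ℝ := (∫ ω in B, ω ∂μ) / (μ B).toReal

/-- `G` is a bi-pooling distribution relative to the prior `μ`. -/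
def IsBiPooling (μ G : Measure ℝ) : Prop :=
  IsMPC μ G ∧
    ∃ (ι : Type) (a b : ι → ℝ),
      (∀ i, (0:ℝ) ≤ a i ∧ a i ≤ b i ∧ b i ≤ 1) ∧
      (Pairwise fun i j => Disjoint (Icc (a i) (b i)) (Icc (a j) (b j))) ∧
      (∀ i, G (Icc (a i) (b i)) = μ (Icc (a i) (b i))) ∧
      (∀ i, (msupport (G.restrict (Icc (a i) (b i)))).encard ≤ 2) ∧
      (∀ s : Set ℝ, MeasurableSet s → s ⊆ Icc (0:ℝ) 1 \ (⋃ i, Icc (a i) (b i)) → G s = μ s)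

/-- `G` is a bi-pooling solution of the information design problem with value function `u`. -/
def IsBiPoolingSolution (μ G : Measure ℝ) (u : ℝ → ℝ) : Prop :=
  IsBiPooling μ G ∧ ∀ G' : Measure ℝ, IsMPC μ G' → (∫ x, u x ∂G') ≤ ∫ x, u x ∂G

/-- A deterministic representation: closed sets covering `[0,1]`, pairwise `μ`-null overlaps. -/
def IsDetRep (μ : Measure ℝ) (n : ℕ) (B : ℕ → Set ℝ) : Prop :=
  (∀ i < n, IsClosed (B i) ∧ B i ⊆ Icc (0:ℝ) 1) ∧
    (⋃ i ∈ Finset.range n, B i) = Icc (0:ℝ) 1 ∧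
    (∀ i < n, ∀ j < n, i ≠ j → μ (B i ∩ B j) = 0)

/-- Incentive compatibility of a deterministic representation. -/
def IsIC (n : ℕ) (γ : ℕ → ℝ) (B : ℕ → Set ℝ) : Prop :=
  ∀ i < n, Icc (γ i) (γ (i+1)) ⊆ ⋃ j ∈ Finset.Ico i n, B j

/-- Obedience of a deterministic representation. -/
def IsObedient (μ : Measure ℝ) (n : ℕ) (γ : ℕ → ℝ) (B : ℕ → Set ℝ) : Prop :=
  ∀ i < n, μ (B i) ≠ 0 → condMean μ (B i) ∈ Icc (γ i) (γ (i+1))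

/-- `B` is a deterministic representation of the distribution `G`:
`G` places mass `μ (B i)` on the conditional mean of `B i`. -/
def IsDetRepOf (μ : Measure ℝ) (n : ℕ) (B : ℕ → Set ℝ) (G : Measure ℝ) : Prop :=
  IsDetRep μ n B ∧
    G = ∑ i ∈ Finset.range n, (μ (B i)) • Measure.dirac (condMean μ (B i))

/-- `{BL, BH}` is a nested intervals pair. -/
def IsNestedPair (BL BH : Set ℝ) : Prop :=
  ∃ w₁ b₁ b₂ w₂ : ℝ, w₁ < b₁ ∧ b₁ ≤ b₂ ∧ b₂ < w₂ ∧
    BL = Icc b₁ b₂ ∧ BH = Icc w₁ b₁ ∪ Icc b₂ w₂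

/-- A canonical representation of `G`: a deterministic representation of `G` in which every
element with nonempty interior is either an interval, or the outer member of a nested
intervals pair whose inner member has a lower index. -/
def IsCanonicalRep (μ : Measure ℝ) (n : ℕ) (B : ℕ → Set ℝ) (G : Measure ℝ) : Prop :=
  IsDetRepOf μ n B G ∧
    ∀ i < n, (interior (B i)).Nonempty →
      (∃ c d : ℝ, B i = Icc c d) ∨ ∃ L < i, IsNestedPair (B L) (B i)

/-- Index `i` is skipped: `B i` has empty interior. -/
def Skipped (B : ℕ → Set ℝ) (i : ℕ) : Prop := interior (B i) = ∅

/-- A skipped index `i` is harmlessly skipped if `A i ⊆ ⋃_{k > i} B k`. -/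
def HarmlesslySkipped (n : ℕ) (γ : ℕ → ℝ) (B : ℕ → Set ℝ) (i : ℕ) : Prop :=
  Icc (γ i) (γ (i+1)) ⊆ ⋃ k ∈ Finset.Ioo i n, B k

/-- Laminar representation property. -/
def IsLaminar (n : ℕ) (B : ℕ → Set ℝ) : Prop :=
  ∀ i < n, B i = closure ((convexHull ℝ (B i)) \ ⋃ j ∈ Finset.range i, convexHull ℝ (B j))

/-- Sender's ex ante payoff of a deterministic representation. -/
def payoff (μ : Measure ℝ) (n : ℕ) (v : ℕ → ℝ) (B : ℕ → Set ℝ) : ℝ :=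
  ∑ i ∈ Finset.range n, v i * (μ (B i)).toReal

/-- Conditional CDF of the prior with density `f` on the interval `[w₁, w₂]`. -/
def condCDF' (f : ℝ → ℝ) (w₁ w₂ x : ℝ) : ℝ :=
  (mcdf (densMeasure f) x - mcdf (densMeasure f) w₁) /
    (mcdf (densMeasure f) w₂ - mcdf (densMeasure f) w₁)

/-- `{zL, zH}` is a feasible bi-pooling support for the interval `[w₁, w₂]`. -/
def FeasibleSupport (f : ℝ → ℝ) (w₁ w₂ zL zH : ℝ) : Prop :=
  ∃ G : Measure ℝ, IsProbabilityMeasure G ∧ msupport G ⊆ {zL, zH} ∧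
    (∀ x ∈ Icc w₁ w₂, (∫ s in w₁..x, mcdf G s) ≤ ∫ s in w₁..x, condCDF' f w₁ w₂ s) ∧
    (∫ s in w₁..w₂, mcdf G s) = ∫ s in w₁..w₂, condCDF' f w₁ w₂ s



/-! ### Finite measures supported on `[0,c]` -/

/-- Finite measure concentrated on `[0,c]`. -/
structure Good (c : ℝ) (κ : Measure ℝ) : Prop where
  fin : IsFiniteMeasure κ
  supp : κ (Icc 0 c)ᶜ = 0

/-- First moment. -/
def mom (κ : Measure ℝ) : ℝ := ∫ ω, ω ∂κ

lemma Good.integrable {c : ℝ} {κ : Measure ℝ} (h : Good c κ) : Integrable (fun ω : ℝ => ω) κ := by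
  have := h.fin
  refine Integrable.of_mem_Icc 0 c aemeasurable_id ?_
  exact mem_ae_iff.2 h.supp

lemma Good.restrict {c : ℝ} {κ : Measure ℝ} (h : Good c κ) (s : Set ℝ) : Good c (κ.restrict s) := by
  have := h.fin
  exact ⟨inferInstance, le_antisymm ((Measure.restrict_apply_le _ _).trans h.supp.le) bot_le⟩

lemma Good.of_le {c : ℝ} {κ ν : Measure ℝ} (h : Good c κ) (hle : ν ≤ κ) : Good c ν := by
  have := h.fin
  exact ⟨isFiniteMeasure_of_le κ hle, le_antisymm ((hle _).trans h.supp.le) bot_le⟩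

lemma Good.add {c : ℝ} {κ ν : Measure ℝ} (h : Good c κ) (h' : Good c ν) : Good c (κ + ν) := by
  have := h.fin
  have := h'.fin
  exact ⟨inferInstance, by simp [h.supp, h'.supp]⟩

lemma Good.smul {c : ℝ} {κ : Measure ℝ} (h : Good c κ) (r : NNReal) : Good c (r • κ) := by
  have := h.fin
  exact ⟨inferInstance, by simp [h.supp]⟩

lemma mom_add {c : ℝ} {κ ν : Measure ℝ} (h : Good c κ) (h' : Good c ν) :
    mom (κ + ν) = mom κ + mom ν := integral_add_measure h.integrable h'.integrable

lemma real_add {c : ℝ} {κ ν : Measure ℝ} (h : Good c κ) (h' : Good c ν) (s : Set ℝ) :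
    (κ + ν).real s = κ.real s + ν.real s := by
  have := h.fin
  have := h'.fin
  exact measureReal_add_apply

lemma mom_smul (κ : Measure ℝ) (r : NNReal) : mom (r • κ) = r * mom κ := by
  unfold mom
  rw [integral_smul_nnreal_measure]; rfl

lemma mom_split {c : ℝ} {κ : Measure ℝ} (h : Good c κ) {s : Set ℝ} (hs : MeasurableSet s) :
    mom κ = mom (κ.restrict s) + mom (κ.restrict sᶜ) := by
  conv_lhs => rw [← Measure.restrict_add_restrict_compl (μ := κ) hs]
  exact mom_add (h.restrict _) (h.restrict _)

lemma real_split {c : ℝ} {κ : Measure ℝ} (h : Good c κ) {s : Set ℝ} (hs : MeasurableSet s) :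
    κ.real univ = κ.real s + κ.real sᶜ := by
  have := h.fin
  exact (measureReal_add_measureReal_compl hs).symm

lemma mom_restrict_le {c : ℝ} {κ : Measure ℝ} (h : Good c κ) {s : Set ℝ} (hs : MeasurableSet s)
    {x : ℝ} (hx : ∀ y ∈ s, y ≤ x) : mom (κ.restrict s) ≤ x * κ.real s := by
  have := h.fin
  have : ∫ y in s, y ∂κ ≤ ∫ y in s, x ∂κ :=
    setIntegral_mono_on h.integrable.integrableOn (integrable_const _).integrableOn hs hx
  unfold mom
  simpa [mul_comm] using this

lemma le_mom_restrict {c : ℝ} {κ : Measure ℝ} (h : Good c κ) {s : Set ℝ} (hs : MeasurableSet s)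
    {x : ℝ} (hx : ∀ y ∈ s, x ≤ y) : x * κ.real s ≤ mom (κ.restrict s) := by
  have := h.fin
  have : ∫ y in s, x ∂κ ≤ ∫ y in s, y ∂κ :=
    setIntegral_mono_on (integrable_const _).integrableOn h.integrable.integrableOn hs hx
  unfold mom
  simpa [mul_comm] using this

lemma mom_restrict_null {κ : Measure ℝ} {s : Set ℝ} (hs : κ s = 0) :
    mom (κ.restrict s) = 0 := by
  rw [Measure.restrict_eq_zero.2 hs]; simp [mom]

lemma mom_low {c x : ℝ} {ρ ν τ : Measure ℝ} (hρ : Good c ρ) (h : ρ = ν + τ) {s : Set ℝ}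
    (hs : MeasurableSet s) (h1 : ∀ y ∈ s, y ≤ x) (h2 : ∀ y ∈ sᶜ, x ≤ y)
    (hm : ρ.real s = ν.real univ) : mom (ρ.restrict s) ≤ mom ν := by
  have gν : Good c ν := hρ.of_le (h ▸ Measure.le_add_right le_rfl)
  have gτ : Good c τ := hρ.of_le (h ▸ Measure.le_add_left le_rfl)
  have e1 := real_split gν hs
  have e2 := mom_split gν hs
  have e3 : mom (ρ.restrict s) = mom (ν.restrict s) + mom (τ.restrict s) := by
    rw [h, Measure.restrict_add]; exact mom_add (gν.restrict _) (gτ.restrict _)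
  have e4 : ρ.real s = ν.real s + τ.real s := by rw [h]; exact real_add gν gτ s
  have e5 := mom_restrict_le gτ hs h1
  have e6 := le_mom_restrict gν hs.compl h2
  have : τ.real s = ν.real sᶜ := by linarith
  rw [this] at e5
  linarith

lemma mom_high {c x : ℝ} {ρ ν τ : Measure ℝ} (hρ : Good c ρ) (h : ρ = ν + τ) {s : Set ℝ}
    (hs : MeasurableSet s) (h1 : ∀ y ∈ s, x ≤ y) (h2 : ∀ y ∈ sᶜ, y ≤ x)
    (hm : ρ.real s = ν.real univ) : mom ν ≤ mom (ρ.restrict s) := by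
  have gν : Good c ν := hρ.of_le (h ▸ Measure.le_add_right le_rfl)
  have gτ : Good c τ := hρ.of_le (h ▸ Measure.le_add_left le_rfl)
  have e1 := real_split gν hs
  have e2 := mom_split gν hs
  have e3 : mom (ρ.restrict s) = mom (ν.restrict s) + mom (τ.restrict s) := by
    rw [h, Measure.restrict_add]; exact mom_add (gν.restrict _) (gτ.restrict _)
  have e4 : ρ.real s = ν.real s + τ.real s := by rw [h]; exact real_add gν gτ s
  have e5 := le_mom_restrict gτ hs h1
  have e6 := mom_restrict_le gν hs.compl h2
  have : τ.real s = ν.real sᶜ := by linarith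
  rw [this] at e5
  linarith

lemma continuous_real_Iic (κ : Measure ℝ) [IsFiniteMeasure κ] [NullSingletonClass κ] :
    Continuous (fun t => κ.real (Iic t)) := by
  have h := intervalIntegral.continuous_primitive (μ := κ) (f := fun _ => (1:ℝ))
    (fun a b => intervalIntegrable_const) 0
  have h2 : (fun t => κ.real (Iic t)) = fun t => κ.real (Iic 0) + ∫ x in (0:ℝ)..t, (1:ℝ) ∂κ := by
    funext t
    rw [← intervalIntegral.integral_Iic_sub_Iic (integrable_const _).integrableOn
      (integrable_const _).integrableOn]
    simp
  rw [h2]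
  exact continuous_const.add h

/-- The interval lemma. -/
lemma exists_interval {c : ℝ} (hc0 : 0 ≤ c) (hc : c ≤ 1) {ρ ν τ : Measure ℝ} [NullSingletonClass ρ]
    (hρ : Good c ρ) (h : ρ = ν + τ) (hp : 0 < ν.real univ) :
    ∃ a b, 0 ≤ a ∧ a < b ∧ b ≤ c ∧ ρ.real (Icc a b) = ν.real univ ∧
      mom (ρ.restrict (Icc a b)) = mom ν := by
  have := hρ.fin
  have gν : Good c ν := hρ.of_le (h ▸ Measure.le_add_right le_rfl)
  have gτ : Good c τ := hρ.of_le (h ▸ Measure.le_add_left le_rfl)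
  set p := ν.real univ with hpdef
  set tot := ρ.real univ with htot
  have hpt : p ≤ tot := by
    rw [htot, h, real_add gν gτ]; linarith [measureReal_nonneg (μ := τ) (s := univ)]
  have hF := continuous_real_Iic ρ
  have hF0 : ρ.real (Iic 0) = 0 := by
    have : ρ (Iic 0) = 0 := by
      rw [← Iio_union_right, measure_union_null_iff]
      refine ⟨measure_mono_null ?_ hρ.supp, measure_singleton _⟩
      intro x hx hx'
      exact absurd hx'.1 (not_le.2 hx)
    simp [Measure.real, this]
  have hsc : ρ (Ioi c) = 0 := by
    refine measure_mono_null ?_ hρ.supp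
    intro x hx hx'
    exact absurd hx'.2 (not_le.2 hx)
  have hFc : ρ.real (Iic c) = tot := by
    have := real_split hρ (measurableSet_Iic (a := c))
    rw [compl_Iic] at this
    simp [Measure.real, hsc] at this
    simp [htot, Measure.real, this]
  have hQ : ∀ s, ∃ x, s ∈ Icc 0 tot → x ∈ Icc 0 c ∧ ρ.real (Iic x) = s := by
    intro s
    by_cases hs : s ∈ Icc 0 tot
    · have := intermediate_value_Icc hc0 hF.continuousOn
      rw [hF0, hFc] at this
      obtain ⟨x, hx, hx'⟩ := this hs
      exact ⟨x, fun _ => ⟨hx, hx'⟩⟩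
    · exact ⟨0, fun h => absurd h hs⟩
  choose Q hQ using hQ
  have hQm : ∀ s ∈ Icc 0 tot, ∀ t ∈ Icc 0 tot, s ≤ t → Q s ≤ Q t := by
    intro s hs t ht hst
    by_contra hlt
    push Not at hlt
    have : ρ.real (Iic (Q t)) ≤ ρ.real (Iic (Q s)) := measureReal_mono (Iic_subset_Iic.2 hlt.le)
    rw [(hQ s hs).2, (hQ t ht).2] at this
    have := le_antisymm hst this
    subst this
    exact lt_irrefl _ hlt
  set T : ℝ → ℝ := fun s => mom (ρ.restrict (Iic (Q s))) with hT
  have hIoc : ∀ s ∈ Icc 0 tot, ∀ t ∈ Icc 0 tot, s ≤ t →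
      T t - T s = mom (ρ.restrict (Icc (Q s) (Q t))) ∧ ρ.real (Icc (Q s) (Q t)) = t - s := by
    intro s hs t ht hst
    have hq := hQm s hs t ht hst
    have hd : Disjoint (Iic (Q s)) (Ioc (Q s) (Q t)) := by
      rw [Set.disjoint_left]; intro x hx hx'; exact absurd hx'.1 (not_lt.2 hx)
    have hu : Iic (Q t) = Iic (Q s) ∪ Ioc (Q s) (Q t) := (Iic_union_Ioc_eq_Iic hq).symm
    constructor
    · rw [← restrict_Ioc_eq_restrict_Icc]
      have : T t = T s + mom (ρ.restrict (Ioc (Q s) (Q t))) := by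
        rw [hT]; dsimp only
        rw [hu, Measure.restrict_union hd measurableSet_Ioc]
        exact mom_add (hρ.restrict _) (hρ.restrict _)
      linarith
    · have e1 : ρ.real (Icc (Q s) (Q t)) = ρ.real (Ioc (Q s) (Q t)) :=
        (measureReal_congr Ioc_ae_eq_Icc).symm
      have e2 : ρ.real (Iic (Q t)) = ρ.real (Iic (Q s)) + ρ.real (Ioc (Q s) (Q t)) := by
        rw [hu]; exact measureReal_union hd measurableSet_Ioc
      rw [(hQ s hs).2, (hQ t ht).2] at e2
      linarith
  have hLip : ∀ s ∈ Icc 0 tot, ∀ t ∈ Icc 0 tot, s ≤ t → |T t - T s| ≤ t - s := by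
    intro s hs t ht hst
    obtain ⟨e1, e2⟩ := hIoc s hs t ht hst
    have e3 := mom_restrict_le hρ (measurableSet_Icc (a := Q s) (b := Q t)) (x := 1)
      (fun y hy => hy.2.trans ((hQ t ht).1.2.trans hc))
    have e4 := le_mom_restrict hρ (measurableSet_Icc (a := Q s) (b := Q t)) (x := 0)
      (fun y hy => (hQ s hs).1.1.trans hy.1)
    rw [e1, abs_le]
    constructor <;> linarith
  have hTc : ContinuousOn T (Icc 0 tot) := by
    have : LipschitzOnWith 1 T (Icc 0 tot) := by
      refine LipschitzOnWith.of_dist_le_mul ?_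
      intro s hs t ht
      rw [Real.dist_eq, Real.dist_eq]
      rcases le_total s t with hst | hst
      · have := hLip s hs t ht hst
        rw [abs_sub_comm (T s), abs_sub_comm s, abs_of_nonneg (sub_nonneg.2 hst)]
        simpa using this
      · have := hLip t ht s hs hst
        rw [abs_of_nonneg (sub_nonneg.2 hst)]
        simpa using this
    exact this.continuousOn
  have hDc : ContinuousOn (fun s => T (s + p) - T s) (Icc 0 (tot - p)) := by
    refine ContinuousOn.sub (hTc.comp (by fun_prop) ?_) (hTc.mono ?_)
    · intro s hs; exact ⟨by linarith [hs.1], by linarith [hs.2]⟩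
    · intro s hs; exact ⟨by linarith [hs.1], by linarith [hs.2]⟩
  have h0 : (0:ℝ) ∈ Icc 0 tot := ⟨le_rfl, by linarith⟩
  have h1 : tot ∈ Icc 0 tot := ⟨by linarith, le_rfl⟩
  have h2 : p ∈ Icc 0 tot := ⟨hp.le, hpt⟩
  have h3 : tot - p ∈ Icc 0 tot := ⟨by linarith, by linarith⟩
  have hT0 : T 0 = 0 := by
    refine mom_restrict_null ?_
    have := (hQ 0 h0).2
    rwa [measureReal_eq_zero_iff] at this
  have hTt : T tot = mom ρ := by
    have e := mom_split hρ (measurableSet_Iic (a := Q tot))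
    have e' := real_split hρ (measurableSet_Iic (a := Q tot))
    rw [(hQ tot h1).2] at e'
    have : ρ.real (Iic (Q tot))ᶜ = 0 := by linarith
    rw [measureReal_eq_zero_iff] at this
    rw [mom_restrict_null this] at e
    rw [hT]; dsimp only; linarith
  have hlow : T p ≤ mom ν :=
    mom_low hρ h measurableSet_Iic (x := Q p) (fun y hy => hy) (fun y hy => (not_le.1 (fun hle => hy hle)).le)
      (hQ p h2).2
  have hhigh : mom ν ≤ T tot - T (tot - p) := by
    have e := mom_split hρ (measurableSet_Iic (a := Q (tot - p)))
    have e' := real_split hρ (measurableSet_Iic (a := Q (tot - p)))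
    rw [(hQ _ h3).2] at e'
    have := mom_high hρ h (measurableSet_Iic (a := Q (tot - p))).compl (x := Q (tot - p))
      (fun y hy => (not_le.1 (fun hle => hy hle)).le) (fun y hy => by simpa using hy) (by linarith)
    rw [hTt]
    have e2 : T (tot - p) = mom (ρ.restrict (Iic (Q (tot - p)))) := rfl
    linarith
  have hiv := intermediate_value_Icc (by linarith : (0:ℝ) ≤ tot - p) hDc
  have hmem : mom ν ∈ Icc (T (0 + p) - T 0) (T (tot - p + p) - T (tot - p)) := by
    rw [zero_add, hT0, sub_add_cancel]
    exact ⟨by linarith, hhigh⟩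
  obtain ⟨s, hs, hs'⟩ := hiv hmem
  have m1 : s ∈ Icc 0 tot := ⟨hs.1, by linarith [hs.2]⟩
  have m2 : s + p ∈ Icc 0 tot := ⟨by linarith [hs.1], by linarith [hs.2]⟩
  obtain ⟨e1, e2⟩ := hIoc s m1 (s + p) m2 (by linarith)
  refine ⟨Q s, Q (s + p), (hQ s m1).1.1, ?_, (hQ _ m2).1.2, by rw [e2]; ring, by rw [← e1]; exact hs'⟩
  refine lt_of_le_of_ne (hQm s m1 _ m2 (by linarith)) ?_
  intro heq
  have := (hQ s m1).2
  rw [heq, (hQ _ m2).2] at this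
  linarith

lemma exists_weights {J : Finset ℕ} {m x : ℕ → ℝ} {a b ML XL MR XR : ℝ} (hab : a < b)
    (hm : ∀ j ∈ J, 0 ≤ m j) (hx1 : ∀ j ∈ J, a * m j ≤ x j) (hx2 : ∀ j ∈ J, x j ≤ b * m j)
    (hML : 0 ≤ ML) (hMR : 0 ≤ MR) (hXL : XL ≤ a * ML) (hXR : b * MR ≤ XR)
    (hL0 : ML = 0 → XL = 0) (hR0 : MR = 0 → XR = 0)
    (hsm : ∑ j ∈ J, m j = ML + MR) (hsx : ∑ j ∈ J, x j = XL + XR) :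
    ∃ α β : ℕ → NNReal, (ML = 0 ∨ ∑ j ∈ J, α j = 1) ∧ (MR = 0 ∨ ∑ j ∈ J, β j = 1) ∧
      ∀ j ∈ J, α j * ML + β j * MR = m j ∧ α j * XL + β j * XR = x j := by
  suffices h : ∃ α β : ℕ → ℝ, (∀ j ∈ J, 0 ≤ α j) ∧ (∀ j ∈ J, 0 ≤ β j) ∧
      (ML = 0 ∨ ∑ j ∈ J, α j = 1) ∧ (MR = 0 ∨ ∑ j ∈ J, β j = 1) ∧
      ∀ j ∈ J, α j * ML + β j * MR = m j ∧ α j * XL + β j * XR = x j by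
    obtain ⟨α, β, hα, hβ, h1, h2, h3⟩ := h
    refine ⟨fun j => (α j).toNNReal, fun j => (β j).toNNReal, h1.imp_right ?_, h2.imp_right ?_, ?_⟩
    · intro h
      rw [← NNReal.coe_inj, NNReal.coe_sum, NNReal.coe_one, ← h]
      exact Finset.sum_congr rfl fun j hj => Real.coe_toNNReal _ (hα j hj)
    · intro h
      rw [← NNReal.coe_inj, NNReal.coe_sum, NNReal.coe_one, ← h]
      exact Finset.sum_congr rfl fun j hj => Real.coe_toNNReal _ (hβ j hj)
    · intro j hj
      dsimp only
      rw [Real.coe_toNNReal _ (hα j hj), Real.coe_toNNReal _ (hβ j hj)]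
      exact h3 j hj
  rcases hML.eq_or_lt with hL | hL
  · have hXL0 := hL0 hL.symm
    subst hXL0
    subst hL
    -- each x j = b * m j
    have hz : ∀ j ∈ J, b * m j - x j = 0 := by
      refine (Finset.sum_eq_zero_iff_of_nonneg (fun j hj => sub_nonneg.2 (hx2 j hj))).1 ?_
      refine le_antisymm ?_ (Finset.sum_nonneg fun j hj => sub_nonneg.2 (hx2 j hj))
      rw [Finset.sum_sub_distrib, ← Finset.mul_sum, hsm, hsx]; linarith
    have hzz : XR = b * MR := by
      have : ∑ j ∈ J, (b * m j - x j) = 0 := Finset.sum_eq_zero hz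
      rw [Finset.sum_sub_distrib, ← Finset.mul_sum, hsm, hsx] at this; linarith
    rcases hMR.eq_or_lt with hR | hR
    · subst hR
      have hz' : ∀ j ∈ J, m j = 0 :=
        (Finset.sum_eq_zero_iff_of_nonneg hm).1 (by linarith)
      refine ⟨0, 0, by simp, by simp, by simp, by simp, ?_⟩
      intro j hj
      have h1 := hz j hj
      have h2 := hz' j hj
      rw [h2] at h1
      simp [h2]; linarith
    · refine ⟨0, fun j => m j / MR, by simp, fun j hj => div_nonneg (hm j hj) hMR, by simp, ?_, ?_⟩
      · right
        rw [← Finset.sum_div, hsm, zero_add, div_self hR.ne']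
      · intro j hj
        have h1 := hz j hj
        refine ⟨by simp; field_simp, ?_⟩
        rw [hzz]; simp; field_simp; linarith
  · rcases hMR.eq_or_lt with hR | hR
    · have hXR0 := hR0 hR.symm
      subst hXR0
      subst hR
      have hz : ∀ j ∈ J, x j - a * m j = 0 := by
        refine (Finset.sum_eq_zero_iff_of_nonneg (fun j hj => sub_nonneg.2 (hx1 j hj))).1 ?_
        refine le_antisymm ?_ (Finset.sum_nonneg fun j hj => sub_nonneg.2 (hx1 j hj))
        rw [Finset.sum_sub_distrib, ← Finset.mul_sum, hsm, hsx]; linarith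
      have hzz : XL = a * ML := by
        have : ∑ j ∈ J, (x j - a * m j) = 0 := Finset.sum_eq_zero hz
        rw [Finset.sum_sub_distrib, ← Finset.mul_sum, hsm, hsx] at this; linarith
      refine ⟨fun j => m j / ML, 0, fun j hj => div_nonneg (hm j hj) hML, by simp, ?_, by simp, ?_⟩
      · right
        rw [← Finset.sum_div, hsm, add_zero, div_self hL.ne']
      · intro j hj
        have h1 := hz j hj
        refine ⟨by simp; field_simp, ?_⟩
        rw [hzz]; simp; field_simp; linarith
    · have hΔ : 0 < ML * XR - MR * XL := by
        have h1 := mul_le_mul_of_nonneg_left hXR hML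
        have h2 := mul_le_mul_of_nonneg_left hXL hMR
        have h3 := mul_lt_mul_of_pos_right hab (mul_pos hL hR)
        nlinarith
      refine ⟨fun j => (m j * XR - x j * MR) / (ML * XR - MR * XL),
        fun j => (ML * x j - XL * m j) / (ML * XR - MR * XL), ?_, ?_, Or.inr ?_, Or.inr ?_, ?_⟩
      · intro j hj
        refine div_nonneg ?_ hΔ.le
        have h1 := mul_le_mul_of_nonneg_left hXR (hm j hj)
        have h2 := mul_le_mul_of_nonneg_left (hx2 j hj) hMR
        nlinarith
      · intro j hj
        refine div_nonneg ?_ hΔ.le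
        have h1 := mul_le_mul_of_nonneg_left hXL (hm j hj)
        have h2 := mul_le_mul_of_nonneg_left (hx1 j hj) hML
        nlinarith
      · rw [← Finset.sum_div, Finset.sum_sub_distrib, ← Finset.sum_mul, ← Finset.sum_mul, hsm, hsx,
          div_eq_one_iff_eq hΔ.ne']
        ring
      · rw [← Finset.sum_div, Finset.sum_sub_distrib, ← Finset.mul_sum, ← Finset.mul_sum, hsm, hsx,
          div_eq_one_iff_eq hΔ.ne']
        ring
      · intro j hj
        constructor
        · rw [div_mul_eq_mul_div, div_mul_eq_mul_div, ← add_div, div_eq_iff hΔ.ne']; ring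
        · rw [div_mul_eq_mul_div, div_mul_eq_mul_div, ← add_div, div_eq_iff hΔ.ne']; ring

lemma restrict_sum (J : Finset ℕ) (N : ℕ → Measure ℝ) (s : Set ℝ) :
    (∑ j ∈ J, N j).restrict s = ∑ j ∈ J, (N j).restrict s :=
  map_sum (Measure.restrictₗ s) N J

lemma Good.term_le {c : ℝ} {J : Finset ℕ} {N : ℕ → Measure ℝ} (h : Good c (∑ j ∈ J, N j))
    {j : ℕ} (hj : j ∈ J) : Good c (N j) := by
  refine h.of_le ?_
  rw [← Finset.add_sum_erase J N hj]
  exact Measure.le_add_right le_rfl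

lemma mom_sum {c : ℝ} {J : Finset ℕ} {N : ℕ → Measure ℝ} (h : ∀ j ∈ J, Good c (N j)) :
    mom (∑ j ∈ J, N j) = ∑ j ∈ J, mom (N j) :=
  integral_finsetSum_measure fun j hj => (h j hj).integrable

lemma real_sum {c : ℝ} {J : Finset ℕ} {N : ℕ → Measure ℝ} (h : ∀ j ∈ J, Good c (N j)) (s : Set ℝ) :
    (∑ j ∈ J, N j).real s = ∑ j ∈ J, (N j).real s := by
  simp only [Measure.real, Measure.finsetSum_apply]
  refine ENNReal.toReal_sum ?_
  intro j hj
  have := (h j hj).fin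
  exact measure_ne_top _ _

lemma exchange {c : ℝ} (hc0 : 0 ≤ c) (hc1 : c ≤ 1) {ρ ν : Measure ℝ} {J : Finset ℕ}
    {N : ℕ → Measure ℝ} [NullSingletonClass ρ] (hρ : Good 1 ρ) (h : ρ = ν + ∑ j ∈ J, N j)
    (hν : ν (Ioi c) = 0) :
    ∃ a b, a ≠ b ∧ 0 ≤ a ∧ b ≤ c ∧ ρ.real (Icc a b) = ν.real univ ∧
      mom (ρ.restrict (Icc a b)) = mom ν ∧ ∃ N' : ℕ → Measure ℝ,
        ∑ j ∈ J, N' j = ρ.restrict (Icc a b)ᶜ ∧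
        ∀ j ∈ J, (N' j).real univ = (N j).real univ ∧ mom (N' j) = mom (N j) ∧
          ∀ d, c ≤ d → N j (Ioi d) = 0 → N' j (Ioi d) = 0 := by
  have gν : Good 1 ν := hρ.of_le (h ▸ Measure.le_add_right le_rfl)
  have gS : Good 1 (∑ j ∈ J, N j) := hρ.of_le (h ▸ Measure.le_add_left le_rfl)
  have gN : ∀ j ∈ J, Good 1 (N j) := fun j hj => gS.term_le hj
  have := hρ.fin
  have := gν.fin
  rcases (measureReal_nonneg (μ := ν) (s := univ)).eq_or_lt with hp | hp
  · have hν0 : ν = 0 := by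
      have := hp.symm
      rwa [measureReal_eq_zero_iff, Measure.measure_univ_eq_zero] at this
    subst hν0
    refine ⟨1, 0, by norm_num, by norm_num, hc0, by simp, by simp [mom], N, ?_, ?_⟩
    · rw [h]; simp
    · intro j hj; exact ⟨rfl, rfl, fun d _ hd => hd⟩
  -- main case
  have hνr : ν.restrict (Iic c) = ν := by
    refine Measure.restrict_eq_self_of_ae_mem ?_
    rw [ae_iff]
    refine measure_mono_null ?_ hν
    intro x hx
    exact not_le.1 (fun hle : x ≤ c => hx hle)
  have hnull : NullSingletonClass (ρ.restrict (Iic c)) := inferInstance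
  have gc : Good c (ρ.restrict (Iic c)) := by
    refine ⟨inferInstance, ?_⟩
    rw [Measure.restrict_apply measurableSet_Icc.compl]
    refine measure_mono_null ?_ hρ.supp
    rintro x ⟨hx, hx'⟩ hx''
    exact hx ⟨hx''.1, hx'⟩
  have hsplit : ρ.restrict (Iic c) = ν + (∑ j ∈ J, N j).restrict (Iic c) := by
    conv_lhs => rw [h, Measure.restrict_add, hνr]
  obtain ⟨a, b, ha, hab, hb, hmass, hmom⟩ := exists_interval hc0 hc1 gc hsplit hp
  have hsub : Icc a b ⊆ Iic c := fun x hx => hx.2.trans hb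
  have hrr : (ρ.restrict (Iic c)).restrict (Icc a b) = ρ.restrict (Icc a b) :=
    Measure.restrict_restrict_of_subset hsub
  rw [hrr] at hmom
  have hmass' : ρ.real (Icc a b) = ν.real univ := by
    rw [← hmass, measureReal_restrict_apply measurableSet_Icc, inter_eq_left.2 hsub]
  refine ⟨a, b, hab.ne, ha, hb, hmass', hmom, ?_⟩
  have mI : MeasurableSet (Icc a b) := measurableSet_Icc
  have hcompl : (Icc a b)ᶜ = Iio a ∪ Ioi b := by
    ext x; simp only [mem_compl_iff, mem_Icc, mem_union, mem_Iio, mem_Ioi, not_and_or, not_le]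
  have hdisj : Disjoint (Iio a) (Ioi b) := by
    rw [Set.disjoint_left]; intro x hx hx'
    exact absurd (hab.trans (hx'.trans hx)) (lt_irrefl _)
  have hνc : ν.restrict (Icc a b)ᶜ = ν.restrict (Iio a) + ν.restrict (Ioi b) := by
    rw [hcompl, Measure.restrict_union hdisj measurableSet_Ioi]
  have gNI : ∀ j ∈ J, Good 1 ((N j).restrict (Icc a b)) := fun j hj => (gN j hj).restrict _
  have hsm : ∑ j ∈ J, (N j).real (Icc a b) = ν.real (Iio a) + ν.real (Ioi b) := by
    have e1 := real_split gν mI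
    have e2 : ν.real (Icc a b)ᶜ = ν.real (Iio a) + ν.real (Ioi b) := by
      rw [hcompl]; exact measureReal_union hdisj measurableSet_Ioi
    have e3 : ρ.real (Icc a b) = ν.real (Icc a b) + ∑ j ∈ J, (N j).real (Icc a b) := by
      rw [h, real_add gν gS, real_sum gN]
    linarith
  have hsx : ∑ j ∈ J, mom ((N j).restrict (Icc a b))
      = mom (ν.restrict (Iio a)) + mom (ν.restrict (Ioi b)) := by
    have e1 := mom_split gν mI
    have e2 : mom (ν.restrict (Icc a b)ᶜ) = mom (ν.restrict (Iio a)) + mom (ν.restrict (Ioi b)) := by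
      rw [hνc]; exact mom_add (gν.restrict _) (gν.restrict _)
    have e3 : mom (ρ.restrict (Icc a b)) = mom (ν.restrict (Icc a b)) +
        ∑ j ∈ J, mom ((N j).restrict (Icc a b)) := by
      rw [h, Measure.restrict_add, mom_add (gν.restrict _) (gS.restrict _), restrict_sum,
        mom_sum gNI]
    linarith
  obtain ⟨α, β, hα, hβ, hαβ⟩ := exists_weights (J := J) (m := fun j => (N j).real (Icc a b))
    (x := fun j => mom ((N j).restrict (Icc a b))) hab (fun j _ => measureReal_nonneg)
    (fun j hj => le_mom_restrict (gN j hj) mI (fun y hy => hy.1))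
    (fun j hj => mom_restrict_le (gN j hj) mI (fun y hy => hy.2))
    (ML := ν.real (Iio a)) (MR := ν.real (Ioi b))
    measureReal_nonneg measureReal_nonneg
    (mom_restrict_le gν measurableSet_Iio (fun y hy => le_of_lt hy))
    (le_mom_restrict gν measurableSet_Ioi (fun y hy => le_of_lt hy))
    (fun h => mom_restrict_null (by rwa [measureReal_eq_zero_iff] at h))
    (fun h => mom_restrict_null (by rwa [measureReal_eq_zero_iff] at h)) hsm hsx
  have hαs : ∑ j ∈ J, α j • ν.restrict (Iio a) = ν.restrict (Iio a) := by
    rcases hα with h0 | h1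
    · rw [measureReal_eq_zero_iff] at h0
      simp [Measure.restrict_eq_zero.2 h0]
    · rw [← Finset.sum_smul, h1, one_smul]
  have hβs : ∑ j ∈ J, β j • ν.restrict (Ioi b) = ν.restrict (Ioi b) := by
    rcases hβ with h0 | h1
    · rw [measureReal_eq_zero_iff] at h0
      simp [Measure.restrict_eq_zero.2 h0]
    · rw [← Finset.sum_smul, h1, one_smul]
  refine ⟨fun j => (N j).restrict (Icc a b)ᶜ + (α j • ν.restrict (Iio a) + β j • ν.restrict (Ioi b)),
    ?_, ?_⟩
  · rw [Finset.sum_add_distrib, Finset.sum_add_distrib, hαs, hβs, ← restrict_sum, ← hνc,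
      ← Measure.restrict_add, add_comm, ← h]
  intro j hj
  obtain ⟨w1, w2⟩ := hαβ j hj
  have gL := (gν.restrict (Iio a)).smul (α j)
  have gR := (gν.restrict (Ioi b)).smul (β j)
  have gC := (gN j hj).restrict (Icc a b)ᶜ
  dsimp only at w1 w2 ⊢
  refine ⟨?_, ?_, ?_⟩
  · rw [real_add gC (gL.add gR), real_add gL gR, real_split (gN j hj) mI, ← w1]
    simp only [measureReal_nnreal_smul_apply, measureReal_restrict_apply_univ]
    ring
  · rw [mom_add gC (gL.add gR), mom_add gL gR, mom_split (gN j hj) mI, ← w2, mom_smul, mom_smul]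
    ring
  · intro d hd h0
    have hνd : ν (Ioi d) = 0 := measure_mono_null (Ioi_subset_Ioi hd) hν
    have z : ∀ (κ : Measure ℝ) (s : Set ℝ), κ (Ioi d) = 0 → κ.restrict s (Ioi d) = 0 :=
      fun κ s hk => le_antisymm ((Measure.restrict_apply_le _ _).trans hk.le) bot_le
    simp [z _ _ h0, z _ _ hνd]

/-! ### Laminar families built from intervals -/

/-- Union of the first `i` intervals. -/
def WW (a b : ℕ → ℝ) (i : ℕ) : Set ℝ := ⋃ k ∈ Finset.range i, Icc (a k) (b k)

/-- The `i`-th laminar element. -/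
def BB (a b : ℕ → ℝ) (i : ℕ) : Set ℝ := closure (Ioo (a i) (b i) \ WW a b i)

lemma WW_closed (a b : ℕ → ℝ) (i : ℕ) : IsClosed (WW a b i) :=
  isClosed_biUnion_finset fun _ _ => isClosed_Icc

lemma mem_WW {a b : ℕ → ℝ} {i : ℕ} {x : ℝ} : x ∈ WW a b i ↔ ∃ k < i, x ∈ Icc (a k) (b k) := by
  simp only [WW, mem_iUnion, Finset.mem_range, exists_prop]

lemma WW_succ (a b : ℕ → ℝ) (i : ℕ) : WW a b (i + 1) = WW a b i ∪ Icc (a i) (b i) := by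
  ext x
  simp only [mem_union, mem_WW]
  constructor
  · rintro ⟨k, hk, hx⟩
    rcases Nat.lt_succ_iff_lt_or_eq.1 hk with h | h
    · exact Or.inl ⟨k, h, hx⟩
    · subst h; exact Or.inr hx
  · rintro (⟨k, hk, hx⟩ | hx)
    · exact ⟨k, by omega, hx⟩
    · exact ⟨i, by omega, hx⟩

lemma WW_congr {a b a' b' : ℕ → ℝ} {i : ℕ} (ha : ∀ k < i, a k = a' k) (hb : ∀ k < i, b k = b' k) :
    WW a b i = WW a' b' i := by
  ext x
  simp only [mem_WW]
  constructor
  · rintro ⟨k, hk, hx⟩; exact ⟨k, hk, by rwa [← ha k hk, ← hb k hk]⟩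
  · rintro ⟨k, hk, hx⟩; exact ⟨k, hk, by rwa [ha k hk, hb k hk]⟩

lemma BB_subset_Icc (a b : ℕ → ℝ) (i : ℕ) : BB a b i ⊆ Icc (a i) (b i) :=
  closure_minimal (sdiff_subset.trans Ioo_subset_Icc_self) isClosed_Icc

lemma Icc_diff_subset_BB {a b : ℕ → ℝ} {i : ℕ} (h : a i ≠ b i) :
    Icc (a i) (b i) \ WW a b i ⊆ BB a b i := by
  rintro x ⟨hx, hx'⟩
  have hcl : x ∈ closure (Ioo (a i) (b i)) := by rwa [closure_Ioo h]
  have := (WW_closed a b i).isOpen_compl.inter_closure ⟨hx', hcl⟩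
  refine closure_mono ?_ this
  rintro y ⟨hy, hy'⟩
  exact ⟨hy', hy⟩

lemma WW_eq_BB {a b : ℕ → ℝ} {i : ℕ} (h : ∀ k < i, a k ≠ b k) {x : ℝ} :
    x ∈ WW a b i ↔ ∃ k < i, x ∈ BB a b k := by
  constructor
  · induction i with
    | zero => simp [mem_WW]
    | succ i ih =>
      intro hx
      by_cases hx' : x ∈ WW a b i
      · obtain ⟨k, hk, hk'⟩ := ih (fun k hk => h k (by omega)) hx'
        exact ⟨k, by omega, hk'⟩
      · rw [WW_succ] at hx
        exact ⟨i, by omega, Icc_diff_subset_BB (h i (by omega)) ⟨hx.resolve_left hx', hx'⟩⟩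
  · rintro ⟨k, hk, hx⟩
    exact mem_WW.2 ⟨k, hk, BB_subset_Icc a b k hx⟩

lemma hull_BB_subset (a b : ℕ → ℝ) (i : ℕ) : convexHull ℝ (BB a b i) ⊆ Icc (a i) (b i) :=
  convexHull_min (BB_subset_Icc a b i) (convex_Icc _ _)

lemma WW_eq_hull {a b : ℕ → ℝ} {i : ℕ} (h : ∀ k < i, a k ≠ b k) :
    (⋃ j ∈ Finset.range i, convexHull ℝ (BB a b j)) = WW a b i := by
  ext x
  simp only [mem_iUnion, Finset.mem_range, exists_prop]
  constructor
  · rintro ⟨k, hk, hx⟩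
    exact mem_WW.2 ⟨k, hk, hull_BB_subset a b k hx⟩
  · intro hx
    obtain ⟨k, hk, hx⟩ := (WW_eq_BB h).1 hx
    exact ⟨k, hk, subset_convexHull ℝ _ hx⟩

lemma BB_laminar {n : ℕ} {a b : ℕ → ℝ} (h : ∀ k < n, a k ≠ b k) : IsLaminar n (BB a b) := by
  intro i hi
  rw [WW_eq_hull (fun k hk => h k (hk.trans hi))]
  apply Subset.antisymm
  · refine closure_mono ?_
    intro x hx
    exact ⟨subset_convexHull ℝ _ (subset_closure hx), hx.2⟩
  · refine closure_minimal ?_ isClosed_closure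
    rintro x ⟨hx, hx'⟩
    exact Icc_diff_subset_BB (h i hi) ⟨hull_BB_subset a b i hx, hx'⟩

lemma BB_inter {a b : ℕ → ℝ} {k i : ℕ} (hki : k < i) : Icc (a k) (b k) ∩ BB a b i ⊆ {a k, b k} := by
  rintro x ⟨hx1, hx2⟩
  have h1 : BB a b i ⊆ closure (Icc (a k) (b k))ᶜ := by
    refine closure_mono ?_
    rintro y ⟨_, hy⟩ hy'
    exact hy (mem_WW.2 ⟨k, hki, hy'⟩)
  have h2 := h1 hx2
  rw [closure_compl, interior_Icc] at h2
  by_contra hne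
  simp only [mem_insert_iff, mem_singleton_iff, not_or] at hne
  exact h2 ⟨lt_of_le_of_ne hx1.1 (Ne.symm hne.1), lt_of_le_of_ne hx1.2 hne.2⟩

lemma BB_WW_null {μ : Measure ℝ} [NullSingletonClass μ] (a b : ℕ → ℝ) (i : ℕ) :
    μ (WW a b i ∩ BB a b i) = 0 := by
  have hfin : (⋃ k ∈ Finset.range i, ({a k, b k} : Set ℝ)).Finite :=
    Set.Finite.biUnion (Finset.finite_toSet _) (fun k _ => by simp)
  refine measure_mono_null ?_ (hfin.measure_zero μ)
  rintro x ⟨hx, hx'⟩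
  obtain ⟨k, hk, hxk⟩ := mem_WW.1 hx
  simp only [mem_iUnion, Finset.mem_range, exists_prop]
  exact ⟨k, hk, BB_inter hk ⟨hxk, hx'⟩⟩

lemma BB_ae {μ : Measure ℝ} [NullSingletonClass μ] {a b : ℕ → ℝ} {i : ℕ} (h : a i ≠ b i) :
    (BB a b i : Set ℝ) =ᵐ[μ] (Icc (a i) (b i) \ WW a b i : Set ℝ) := by
  rw [ae_eq_set]
  constructor
  · refine measure_mono_null ?_ (BB_WW_null (μ := μ) a b i)
    rintro x ⟨hx, hx'⟩
    refine ⟨?_, hx⟩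
    by_contra hW
    exact hx' ⟨BB_subset_Icc a b i hx, hW⟩
  · rw [sdiff_eq_empty.2 (Icc_diff_subset_BB h)]; simp

lemma gamma_mono {n : ℕ} {γ : ℕ → ℝ} (hγ : ∀ i < n, γ i < γ (i+1)) {i j : ℕ} (hij : i ≤ j)
    (hj : j ≤ n) : γ i ≤ γ j := by
  induction j, hij using Nat.le_induction with
  | base => exact le_rfl
  | succ j hij ih => exact (ih (by omega)).trans (hγ j (by omega)).le

lemma build {μ : Measure ℝ} [NullSingletonClass μ] (hμ : Good 1 μ) {n : ℕ} {γ : ℕ → ℝ}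
    (hγ0 : γ 0 = 0) (hγn : γ n = 1) (hγ : ∀ i < n, γ i < γ (i+1)) {N : ℕ → Measure ℝ}
    (hN : ∑ j ∈ Finset.range n, N j = μ) (hNs : ∀ j < n, N j (Ioi (γ (j+1))) = 0) :
    ∀ i ≤ n, ∃ (a b : ℕ → ℝ) (N' : ℕ → Measure ℝ),
      (∀ k < i, a k ≠ b k ∧ 0 ≤ a k ∧ b k ≤ γ (k+1) ∧
        μ.real (Icc (a k) (b k) \ WW a b k) = (N k).real univ ∧
        mom (μ.restrict (Icc (a k) (b k) \ WW a b k)) = mom (N k)) ∧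
      ∑ j ∈ Finset.Ico i n, N' j = μ.restrict (WW a b i)ᶜ ∧
      ∀ j ∈ Finset.Ico i n, (N' j).real univ = (N j).real univ ∧ mom (N' j) = mom (N j) ∧
        N' j (Ioi (γ (j+1))) = 0 := by
  intro i
  induction i with
  | zero =>
    intro _
    refine ⟨fun _ => 0, fun _ => 0, N, by simp, ?_, ?_⟩
    · rw [← Finset.range_eq_Ico, hN]; simp [WW]
    · intro j hj
      exact ⟨rfl, rfl, hNs j (Finset.mem_Ico.1 hj).2⟩
  | succ i ih =>
    intro hi
    obtain ⟨a, b, N', h1, h2, h3⟩ := ih (by omega)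
    have hii : i ∈ Finset.Ico i n := Finset.mem_Ico.2 ⟨le_rfl, by omega⟩
    have hc0 : 0 ≤ γ (i+1) := by rw [← hγ0]; exact gamma_mono hγ (by omega) (by omega)
    have hc1 : γ (i+1) ≤ 1 := by rw [← hγn]; exact gamma_mono hγ (by omega) (by omega)
    rw [Finset.sum_eq_sum_Ico_succ_bot (by omega : i < n)] at h2
    obtain ⟨a0, b0, q1, q2, q3, q4, q5, M, q6, q7⟩ :=
      exchange hc0 hc1 (hμ.restrict (WW a b i)ᶜ) h2.symm (h3 i hii).2.2
    have hWa : ∀ k ≤ i, WW (Function.update a i a0) (Function.update b i b0) k = WW a b k := by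
      intro k hk
      refine WW_congr ?_ ?_
      · intro l hl; exact Function.update_of_ne (by omega) _ _
      · intro l hl; exact Function.update_of_ne (by omega) _ _
    have hWm := (WW_closed a b i).measurableSet
    refine ⟨Function.update a i a0, Function.update b i b0, M, ?_, ?_, ?_⟩
    · intro k hk
      rw [hWa k (by omega)]
      rcases Nat.lt_succ_iff_lt_or_eq.1 hk with h | h
      · rw [Function.update_of_ne (by omega), Function.update_of_ne (by omega)]
        exact h1 k h
      · subst h
        simp only [Function.update_self]
        refine ⟨q1, q2, q3, ?_, ?_⟩
        · rw [measureReal_restrict_apply measurableSet_Icc] at q4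
          rw [sdiff_eq, q4, (h3 k hii).1]
        · rw [Measure.restrict_restrict measurableSet_Icc] at q5
          rw [sdiff_eq, q5, (h3 k hii).2.1]
    · rw [q6, WW_succ, hWa i le_rfl, Measure.restrict_restrict measurableSet_Icc.compl]
      simp only [Function.update_self, compl_union]
      rw [inter_comm]
    · intro j hj
      have hj' := Finset.mem_Ico.1 hj
      have hj2 : j ∈ Finset.Ico i n := Finset.mem_Ico.2 ⟨by omega, hj'.2⟩
      obtain ⟨r1, r2, r3⟩ := q7 j hj
      obtain ⟨s1, s2, s3⟩ := h3 j hj2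
      exact ⟨r1.trans s1, r2.trans s2, r3 _ (gamma_mono hγ (by omega) (by omega)) s3⟩

lemma laminar_of {μ : Measure ℝ} [NullSingletonClass μ] (hμ : Good 1 μ)
    (hfs : ∀ U : Set ℝ, IsOpen U → μ U = 0 → ∀ x ∈ Icc (0:ℝ) 1, x ∉ U) {n : ℕ} {γ : ℕ → ℝ}
    (hγ0 : γ 0 = 0) (hγn : γ n = 1) (hγ : ∀ i < n, γ i < γ (i+1)) {N : ℕ → Measure ℝ}
    (hN : ∑ j ∈ Finset.range n, N j = μ) (hNs : ∀ j < n, N j (Ioi (γ (j+1))) = 0)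
    (hNm : ∀ j < n, γ j * (N j).real univ ≤ mom (N j)) :
    ∃ BR : ℕ → Set ℝ, IsDetRep μ n BR ∧ IsLaminar n BR ∧
      IsObedient μ n γ BR ∧ IsIC n γ BR ∧ ∀ j < n, μ.real (BR j) = (N j).real univ := by
  have := hμ.fin
  obtain ⟨a, b, N', h1, h2, -⟩ := build hμ hγ0 hγn hγ hN hNs n le_rfl
  have hne : ∀ k < n, a k ≠ b k := fun k hk => (h1 k hk).1
  have hsub : ∀ i < n, BB a b i ⊆ Icc 0 (γ (i+1)) := fun i hi x hx =>
    ⟨(h1 i hi).2.1.trans (BB_subset_Icc a b i hx).1,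
      (BB_subset_Icc a b i hx).2.trans (h1 i hi).2.2.1⟩
  have hγ1 : ∀ i < n, γ (i+1) ≤ 1 := fun i hi => by
    rw [← hγn]; exact gamma_mono hγ (by omega) le_rfl
  have hnull : μ (WW a b n)ᶜ = 0 := by
    rw [Finset.Ico_self, Finset.sum_empty] at h2
    exact Measure.restrict_eq_zero.1 h2.symm
  have hcov : ∀ x ∈ Icc (0:ℝ) 1, ∃ k < n, x ∈ BB a b k := by
    intro x hx
    have := hfs _ (WW_closed a b n).isOpen_compl hnull x hx
    exact (WW_eq_BB hne).1 (not_not.1 this)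
  have hmass : ∀ j < n, μ.real (BB a b j) = (N j).real univ := fun j hj => by
    rw [measureReal_congr (BB_ae (hne j hj))]; exact (h1 j hj).2.2.2.1
  have hmom : ∀ j < n, mom (μ.restrict (BB a b j)) = mom (N j) := fun j hj => by
    rw [Measure.restrict_congr_set (BB_ae (hne j hj))]; exact (h1 j hj).2.2.2.2
  refine ⟨BB a b, ⟨?_, ?_, ?_⟩, BB_laminar hne, ?_, ?_, hmass⟩
  · intro i hi
    exact ⟨isClosed_closure, fun x hx => ⟨(hsub i hi hx).1, (hsub i hi hx).2.trans (hγ1 i hi)⟩⟩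
  · ext x
    simp only [mem_iUnion, Finset.mem_range, exists_prop]
    constructor
    · rintro ⟨i, hi, hx⟩
      exact ⟨(hsub i hi hx).1, (hsub i hi hx).2.trans (hγ1 i hi)⟩
    · exact hcov x
  · have key : ∀ i j, i < j → μ (BB a b i ∩ BB a b j) = 0 := by
      intro i j hij
      refine measure_mono_null ?_ (BB_WW_null (μ := μ) a b j)
      rintro x ⟨hx, hx'⟩
      exact ⟨mem_WW.2 ⟨i, hij, BB_subset_Icc a b i hx⟩, hx'⟩
    intro i _ j _ hij
    rcases lt_or_gt_of_ne hij with h | h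
    · exact key i j h
    · rw [inter_comm]; exact key j i h
  · intro i hi hne0
    have hpos : 0 < (μ (BB a b i)).toReal := ENNReal.toReal_pos hne0 (measure_ne_top _ _)
    have e1 := hNm i hi
    rw [← hmass i hi, ← hmom i hi] at e1
    have e2 := mom_restrict_le hμ (s := BB a b i) isClosed_closure.measurableSet
      (x := γ (i+1)) (fun y hy => (hsub i hi hy).2)
    exact ⟨(le_div_iff₀ hpos).2 e1, (div_le_iff₀ hpos).2 e2⟩
  · intro i hi
    have hcl : IsClosed (⋃ j ∈ Finset.Ico i n, BB a b j) :=
      isClosed_biUnion_finset fun _ _ => isClosed_closure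
    have hγi : 0 ≤ γ i := by rw [← hγ0]; exact gamma_mono hγ (by omega) (by omega)
    rw [← closure_Ioc (hγ i hi).ne]
    refine closure_minimal ?_ hcl
    intro x hx
    obtain ⟨k, hk, hxk⟩ := hcov x ⟨hγi.trans hx.1.le, hx.2.trans (hγ1 i hi)⟩
    simp only [mem_iUnion, Finset.mem_Ico, exists_prop]
    refine ⟨k, ⟨?_, hk⟩, hxk⟩
    by_contra hki
    have h3 := (hsub k hk hxk).2
    have h4 : γ (k+1) ≤ γ i := gamma_mono hγ (by omega) (by omega)
    exact absurd hx.1 (not_lt.2 (h3.trans h4))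

lemma detRep_sum {μ : Measure ℝ} (hμ : Good 1 μ) {n : ℕ} {B : ℕ → Set ℝ} (h : IsDetRep μ n B) :
    ∑ j ∈ Finset.range n, μ.restrict (B j) = μ := by
  have key : ∀ k ≤ n, ∑ j ∈ Finset.range k, μ.restrict (B j)
      = μ.restrict (⋃ j ∈ Finset.range k, B j) := by
    intro k
    induction k with
    | zero => simp
    | succ k ih =>
      intro hk
      rw [Finset.sum_range_succ, ih (by omega)]
      have hu : (⋃ j ∈ Finset.range (k+1), B j) = (⋃ j ∈ Finset.range k, B j) ∪ B k := by
        rw [Finset.range_add_one, Finset.set_biUnion_insert, union_comm]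
      rw [hu, Measure.restrict_union₀]
      · unfold AEDisjoint
        rw [iUnion₂_inter]
        refine (measure_biUnion_null_iff (Finset.countable_toSet _)).2 ?_
        intro j hj
        have hj' := Finset.mem_range.1 hj
        exact h.2.2 j (by omega) k (by omega) (by omega)
      · exact (h.1 k (by omega)).1.measurableSet.nullMeasurableSet
  rw [key n le_rfl, h.2.1]
  refine Measure.restrict_eq_self_of_ae_mem ?_
  exact mem_ae_iff.2 hμ.supp

lemma exists_cell {n : ℕ} {γ : ℕ → ℝ} {k : ℕ} (hk : k < n) {x : ℝ} (h1 : γ k ≤ x) (h2 : x ≤ γ n) :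
    ∃ i, k ≤ i ∧ i < n ∧ x ∈ Icc (γ i) (γ (i+1)) := by
  induction n, (Nat.succ_le_of_lt hk) using Nat.le_induction with
  | base => exact ⟨k, le_rfl, by omega, h1, h2⟩
  | succ m hm ih =>
    by_cases hx : x ≤ γ m
    · obtain ⟨i, hi, hi', hx'⟩ := ih (by omega) hx
      exact ⟨i, hi, by omega, hx'⟩
    · exact ⟨m, by omega, by omega, (not_le.1 hx).le, h2⟩

lemma unravel_detRep {μ : Measure ℝ} [NullSingletonClass μ] {n : ℕ} (hn : 2 ≤ n) {γ : ℕ → ℝ}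
    (hγ0 : γ 0 = 0) (hγn : γ n = 1) (hγ : ∀ i < n, γ i < γ (i+1)) :
    IsDetRep μ n (fun i => Icc (γ i) (γ (i+1))) := by
  have h01 : ∀ i < n, Icc (γ i) (γ (i+1)) ⊆ Icc (0:ℝ) 1 := by
    intro i hi
    refine Icc_subset_Icc ?_ ?_
    · rw [← hγ0]; exact gamma_mono hγ (by omega) (by omega)
    · rw [← hγn]; exact gamma_mono hγ (by omega) (by omega)
  refine ⟨fun i hi => ⟨isClosed_Icc, h01 i hi⟩, ?_, ?_⟩
  · ext x
    simp only [mem_iUnion, Finset.mem_range, exists_prop]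
    constructor
    · rintro ⟨i, hi, hx⟩; exact h01 i hi hx
    · intro hx
      obtain ⟨i, -, hi, hx'⟩ := exists_cell (k := 0) (n := n) (γ := γ) (x := x) (by omega)
        (by rw [hγ0]; exact hx.1) (by rw [hγn]; exact hx.2)
      exact ⟨i, hi, hx'⟩
  · have key : ∀ i j, i < j → j < n → μ (Icc (γ i) (γ (i+1)) ∩ Icc (γ j) (γ (j+1))) = 0 := by
      intro i j hij hj
      refine measure_mono_null ?_ (measure_singleton (γ (i+1)))
      rintro x ⟨hx, hx'⟩
      exact le_antisymm hx.2 ((gamma_mono hγ (by omega) (by omega)).trans hx'.1)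
    intro i hi j hj hij
    rcases lt_or_gt_of_ne hij with h | h
    · exact key i j h hj
    · rw [inter_comm]; exact key j i h hi

lemma dens_good {f : ℝ → ℝ} (hf : IsPrior f) : Good 1 (densMeasure f) := by
  refine ⟨⟨by rw [hf.prob]; exact ENNReal.one_lt_top⟩, ?_⟩
  refine withDensity_absolutelyContinuous _ _ ?_
  rw [Measure.restrict_apply measurableSet_Icc.compl]; simp

lemma dens_null (f : ℝ → ℝ) : NullSingletonClass (densMeasure f) := by
  unfold densMeasure
  infer_instance

lemma dens_full {f : ℝ → ℝ} (hf : IsPrior f) (U : Set ℝ) (hU : IsOpen U)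
    (h0 : densMeasure f U = 0) : ∀ x ∈ Icc (0:ℝ) 1, x ∉ U := by
  intro x hx hxU
  have hac : volume.restrict (Icc (0:ℝ) 1) ≪ densMeasure f := by
    refine withDensity_absolutelyContinuous' (by have := hf.meas; fun_prop) ?_
    filter_upwards [ae_restrict_mem measurableSet_Icc] with y hy
    simpa using hf.pos y hy
  have h1 := hac h0
  rw [Measure.restrict_apply hU.measurableSet] at h1
  have hcl : x ∈ closure (Ioo (0:ℝ) 1) := by rwa [closure_Ioo (by norm_num)]
  have hne : (U ∩ Ioo (0:ℝ) 1).Nonempty := mem_closure_iff.1 hcl U hU hxU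
  have hpos := (hU.inter isOpen_Ioo).measure_pos volume hne
  exact hpos.ne' (measure_mono_null (inter_subset_inter_right _ Ioo_subset_Icc_self) h1)

/-- every payoff between the unraveling payoff and the maximal Sender
payoff is attained by an obedient and IC laminar representation. -/
theorem payoff_interval_attained
    (f : ℝ → ℝ) (hf : IsPrior f)
    (n : ℕ) (hn : 2 ≤ n)
    (γ : ℕ → ℝ) (hγ0 : γ 0 = 0) (hγn : γ n = 1)
    (hγ : ∀ i < n, γ i < γ (i+1))
    (v : ℕ → ℝ) (hv0 : v 0 = 0) (hv : ∀ i, i + 1 < n → v i < v (i+1))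
    (B : ℕ → Set ℝ)
    (hdet : IsDetRep (densMeasure f) n B)
    (hob : IsObedient (densMeasure f) n γ B)
    (hic : IsIC n γ B)
    (hmax : ∀ B' : ℕ → Set ℝ, IsDetRep (densMeasure f) n B' →
      IsObedient (densMeasure f) n γ B' → IsIC n γ B' →
      payoff (densMeasure f) n v B' ≤ payoff (densMeasure f) n v B)
    (R : ℝ)
    (hR1 : payoff (densMeasure f) n v (fun i => Icc (γ i) (γ (i+1))) ≤ R)
    (hR2 : R ≤ payoff (densMeasure f) n v B) :
    ∃ BR : ℕ → Set ℝ, IsDetRep (densMeasure f) n BR ∧ IsLaminar n BR ∧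
      IsObedient (densMeasure f) n γ BR ∧ IsIC n γ BR ∧
      payoff (densMeasure f) n v BR = R := by
  have gμ := dens_good hf
  have hnull := dens_null f
  have hfull := dens_full hf
  generalize densMeasure f = μ at *
  have := gμ.fin
  have hA := unravel_detRep (μ := μ) hn hγ0 hγn hγ
  set A : ℕ → Set ℝ := fun i => Icc (γ i) (γ (i+1)) with hAdef
  have mB : ∀ j < n, MeasurableSet (B j) := fun j hj => (hdet.1 j hj).1.measurableSet
  have mA : ∀ j, MeasurableSet (A j) := fun j => measurableSet_Icc
  -- the path
  set P : ℝ → ℕ → Measure ℝ :=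
    fun t j => (μ.restrict (B j)).restrict (Iic t)ᶜ + (μ.restrict (A j)).restrict (Iic t) with hP
  have hPreal : ∀ t j, (P t j).real univ = (μ.real (B j) - (μ.restrict (B j)).real (Iic t))
      + (μ.restrict (A j)).real (Iic t) := by
    intro t j
    rw [hP]; dsimp only
    rw [real_add ((gμ.restrict _).restrict _) ((gμ.restrict _).restrict _)]
    simp only [measureReal_restrict_apply_univ]
    have := real_split (gμ.restrict (B j)) (measurableSet_Iic (a := t))
    rw [measureReal_restrict_apply_univ] at this
    linarith
  have hcont : ContinuousOn (fun t => ∑ j ∈ Finset.range n, v j * (P t j).real univ) (Icc 0 1) := by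
    refine Continuous.continuousOn ?_
    simp only [hPreal]
    refine continuous_finsetSum _ fun j _ => continuous_const.mul ?_
    exact (continuous_const.sub (continuous_real_Iic _)).add (continuous_real_Iic _)
  have hz : ∀ κ : Measure ℝ, Good 1 κ → NullSingletonClass κ → κ.real (Iic 0) = 0 := by
    intro κ hκ hκ'
    have : κ (Iic 0) = 0 := by
      rw [← Iio_union_right, measure_union_null_iff]
      refine ⟨measure_mono_null ?_ hκ.supp, measure_singleton _⟩
      intro x hx hx'
      exact absurd hx'.1 (not_le.2 hx)
    simp [Measure.real, this]
  have ho : ∀ κ : Measure ℝ, Good 1 κ → κ.real (Iic 1) = κ.real univ := by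
    intro κ hκ
    have h0 : κ (Iic 1)ᶜ = 0 := by
      refine measure_mono_null ?_ hκ.supp
      intro x hx hx'
      exact hx hx'.2
    have := real_split hκ (measurableSet_Iic (a := (1:ℝ)))
    simp only [Measure.real, h0] at this ⊢
    simpa using this.symm
  have hiv := intermediate_value_Icc' zero_le_one hcont
  have hmem : R ∈ Icc (∑ j ∈ Finset.range n, v j * (P 1 j).real univ)
      (∑ j ∈ Finset.range n, v j * (P 0 j).real univ) := by
    constructor
    · refine le_trans (le_of_eq ?_) hR1
      refine Finset.sum_congr rfl fun j _ => ?_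
      rw [hPreal, ho _ (gμ.restrict _), ho _ (gμ.restrict _)]
      simp [Measure.real]
    · refine le_trans hR2 (le_of_eq ?_)
      refine Finset.sum_congr rfl fun j _ => ?_
      rw [hPreal, hz _ (gμ.restrict _) inferInstance, hz _ (gμ.restrict _) inferInstance]
      simp [Measure.real]
  obtain ⟨t, -, htR⟩ := hiv hmem
  have hsum : ∑ j ∈ Finset.range n, P t j = μ := by
    rw [hP]; dsimp only
    rw [Finset.sum_add_distrib, ← restrict_sum, ← restrict_sum, detRep_sum gμ hdet,
      detRep_sum gμ hA, add_comm, Measure.restrict_add_restrict_compl measurableSet_Iic]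
  have hsupp : ∀ j < n, P t j (Ioi (γ (j+1))) = 0 := by
    intro j hj
    have z1 : μ.restrict (B j) (Ioi (γ (j+1))) = 0 := by
      rw [Measure.restrict_apply measurableSet_Ioi]
      have hU : μ (⋃ k ∈ Finset.Ioo j n, (B j ∩ B k)) = 0 := by
        refine (measure_biUnion_null_iff (Finset.countable_toSet _)).2 ?_
        intro k hk
        have hk' := Finset.mem_Ioo.1 hk
        exact hdet.2.2 j hj k hk'.2 (by omega)
      refine measure_mono_null ?_ hU
      rintro x ⟨hx, hxB⟩
      have hx1 : x ≤ γ n := by rw [hγn]; exact ((hdet.1 j hj).2 hxB).2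
      have hjn : j + 1 < n := by
        by_contra hh
        have : j + 1 = n := by omega
        rw [this] at hx
        exact absurd hx1 (not_le.2 hx)
      obtain ⟨i, hi, hi', hxi⟩ := exists_cell hjn (le_of_lt hx) hx1
      have := hic i hi' hxi
      simp only [mem_iUnion, Finset.mem_Ico, exists_prop] at this
      obtain ⟨k, hk, hxk⟩ := this
      simp only [mem_iUnion, Finset.mem_Ioo, exists_prop]
      exact ⟨k, ⟨by omega, hk.2⟩, hxB, hxk⟩
    have z2 : μ.restrict (A j) (Ioi (γ (j+1))) = 0 := by
      rw [Measure.restrict_apply measurableSet_Ioi]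
      have : Ioi (γ (j+1)) ∩ A j = ∅ := by
        ext x
        simp only [mem_inter_iff, mem_Ioi, mem_empty_iff_false, iff_false, not_and]
        intro hx hx'
        exact absurd hx'.2 (not_le.2 hx)
      rw [this]; simp
    have z : ∀ (κ : Measure ℝ) (s : Set ℝ), κ (Ioi (γ (j+1))) = 0 →
        κ.restrict s (Ioi (γ (j+1))) = 0 :=
      fun κ s hk => le_antisymm ((Measure.restrict_apply_le _ _).trans hk.le) bot_le
    rw [hP]; dsimp only
    rw [Measure.add_apply, z _ _ z1, z _ _ z2, add_zero]
  have hmean : ∀ j < n, γ j * (P t j).real univ ≤ mom (P t j) := by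
    intro j hj
    have gB := gμ.restrict (B j)
    have gA := gμ.restrict (A j)
    have eB : γ j * μ.real (B j) ≤ mom (μ.restrict (B j)) := by
      by_cases h0 : μ (B j) = 0
      · rw [mom_restrict_null h0]; simp [Measure.real, h0]
      · have hpos : 0 < (μ (B j)).toReal := ENNReal.toReal_pos h0 (measure_ne_top _ _)
        exact (le_div_iff₀ hpos).1 (hob j hj h0).1
    have e1 : γ j * (μ.restrict (A j)).real (Iic t) ≤ mom ((μ.restrict (A j)).restrict (Iic t)) := by
      rw [Measure.restrict_restrict measurableSet_Iic, measureReal_restrict_apply measurableSet_Iic]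
      exact le_mom_restrict gμ (measurableSet_Iic.inter (mA j)) (fun y hy => hy.2.1)
    have hs := real_split gB (measurableSet_Iic (a := t))
    rw [measureReal_restrict_apply_univ] at hs
    have hms := mom_split gB (measurableSet_Iic (a := t))
    have e2 : γ j * (μ.real (B j) - (μ.restrict (B j)).real (Iic t))
        ≤ mom ((μ.restrict (B j)).restrict (Iic t)ᶜ) := by
      rcases le_total (γ j) t with hle | hle
      · have := le_mom_restrict gB (measurableSet_Iic (a := t)).compl (x := γ j)
          (fun y hy => hle.trans (not_le.1 (fun hh => hy hh)).le)
        rw [hs]; linarith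
      · have := mom_restrict_le gB (measurableSet_Iic (a := t)) (x := γ j)
          (fun y hy => le_trans hy hle)
        linarith
    have e3 : mom (P t j) = mom ((μ.restrict (B j)).restrict (Iic t)ᶜ) +
        mom ((μ.restrict (A j)).restrict (Iic t)) := mom_add (gB.restrict _) (gA.restrict _)
    rw [hPreal, e3]
    linarith
  obtain ⟨BR, r1, r2, r3, r4, r5⟩ := laminar_of gμ hfull hγ0 hγn hγ hsum hsupp hmean
  refine ⟨BR, r1, r2, r3, r4, ?_⟩
  rw [← htR]
  refine Finset.sum_congr rfl fun j hj => ?_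
  rw [← r5 j (Finset.mem_range.1 hj)]
  rfl

end VerifiableDisclosure
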